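/- Let T ≥ 1, c > 0, γ > 0, and for t = 1,…,T let y_t ∈ ℝ^m and x_t ∈ ℝ^{p·m} (indexed by Fin p × Fin m). Let A₂ ∈ ℝ^{m×r₂} and A₃ ∈ ℝ^{p×r₃} have orthonormal columns, set K = A₃ ⊗ A₂, let G ∈ ℝ^{r₁×(r₃·r₂)} have all entries bounded in absolute value by c, and let U ∈ ℝ^{m×r₁} be arbitrary. For A₁ ∈ ℝ^{m×r₁} define ∇Ψ(A₁) = (1/T) Σ_{t=1}^T (A₁ G Kᵀ x_t − y_t) x_tᵀ K Gᵀ + γ (A₁ − U). Then for all A₁¹, A₁², ‖∇Ψ(A₁¹) − ∇Ψ(A₁²)‖_F ≤ (ν² c₁ + γ) ‖A₁¹ − A₁²‖_F, where ν = c√(r₁ r₂ r₃) and c₁ = (1/T) Σ_{t=1}^T ‖x_t‖₂². -/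

import Mathlib

open Matrix
open scoped Kronecker

/-- The Euclidean (ℓ²) norm of a real vector. -/
noncomputable def euclNorm {n : Type*} [Fintype n] (v : n → ℝ) : ℝ :=
  Real.sqrt (∑ i, (v i) ^ 2)

/-- The Frobenius norm of a real matrix. -/
noncomputable def frobNorm {m n : Type*} [Fintype m] [Fintype n] (A : Matrix m n ℝ) : ℝ :=
  Real.sqrt (∑ i, ∑ j, (A i j) ^ 2)

/-!
With `z t = G Kᵀ x t` and `w = 1 / T`, the gradient is that of a ridge-penalized least squares
problem with regressors `z t`. In the difference of two gradients the targets `y` and the center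
`U` cancel, leaving `w ∑ t, (B₁ - B₂) z t (z t)ᵀ + γ (B₁ - B₂)`, so the Lipschitz
constant is at most `|w| ∑ t, ‖z t‖² + |γ|`. Since `Kᵀ` is a contraction, `‖z t‖ ≤ ‖G‖_F ‖x t‖`.
-/

section Norms

variable {m n : Type*} [Fintype m] [Fintype n]

theorem euclNorm_nonneg (v : n → ℝ) : 0 ≤ euclNorm v :=
  Real.sqrt_nonneg _

theorem frobNorm_nonneg (A : Matrix m n ℝ) : 0 ≤ frobNorm A :=
  Real.sqrt_nonneg _

theorem euclNorm_eq_norm_toLp (v : n → ℝ) : euclNorm v = ‖WithLp.toLp 2 v‖ := by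
  simp [euclNorm, EuclideanSpace.norm_eq]

open scoped Matrix.Norms.Frobenius in
theorem frobNorm_eq_frobenius_norm (A : Matrix m n ℝ) : frobNorm A = ‖A‖ := by
  simp [frobNorm, frobenius_norm_def, Real.sqrt_eq_rpow]

theorem frobNorm_vecMulVec (u : m → ℝ) (v : n → ℝ) :
    frobNorm (vecMulVec u v) = euclNorm u * euclNorm v := by
  simp only [frobNorm, euclNorm, vecMulVec_apply, mul_pow]
  rw [← Finset.sum_mul_sum, Real.sqrt_mul (by positivity)]

theorem euclNorm_mulVec_le_frobNorm_mul (A : Matrix m n ℝ) (v : n → ℝ) :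
    euclNorm (A *ᵥ v) ≤ frobNorm A * euclNorm v := by
  open scoped Matrix.Norms.Frobenius in
  simpa only [← replicateCol_mulVec, frobenius_norm_replicateCol, ← euclNorm_eq_norm_toLp,
    ← frobNorm_eq_frobenius_norm] using frobenius_norm_mul A (replicateCol Unit v)

theorem frobNorm_le_mul_sqrt_card {A : Matrix m n ℝ} {c : ℝ} (hc : 0 ≤ c)
    (hA : ∀ i j, |A i j| ≤ c) :
    frobNorm A ≤ c * √(Fintype.card m * Fintype.card n) := by
  calc frobNorm A ≤ √(∑ _i : m, ∑ _j : n, c ^ 2) :=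
        Real.sqrt_le_sqrt <| Finset.sum_le_sum fun i _ ↦ Finset.sum_le_sum fun j _ ↦
          sq_le_sq.mpr <| (hA i j).trans (le_abs_self c)
    _ = √(c ^ 2 * (Fintype.card m * Fintype.card n)) := by
        simp only [Finset.sum_const, Finset.card_univ, nsmul_eq_mul]
        ring_nf
    _ = c * √(Fintype.card m * Fintype.card n) := by
        rw [Real.sqrt_mul (sq_nonneg c), Real.sqrt_sq hc]

end Norms

section OrthonormalColumns

theorem transpose_mul_self_kronecker_eq_one {m n q r : Type*} [Fintype m] [Fintype n]
    [DecidableEq q] [DecidableEq r] {A : Matrix m q ℝ} {B : Matrix n r ℝ}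
    (hA : Aᵀ * A = 1) (hB : Bᵀ * B = 1) : (A ⊗ₖ B)ᵀ * (A ⊗ₖ B) = 1 := by
  rw [← kroneckerMap_transpose, ← mul_kronecker_mul, hA, hB, one_kronecker_one]

variable {n q : Type*} [Fintype n] [Fintype q] [DecidableEq q]

open scoped Matrix.Norms.L2Operator in
theorem l2_opNorm_le_one_of_transpose_mul_self_eq_one {K : Matrix n q ℝ} (hK : Kᵀ * K = 1) :
    ‖K‖ ≤ 1 := by
  have norm_one_le : ‖(1 : Matrix q q ℝ)‖ ≤ 1 := by
    rw [← diagonal_one, l2_opNorm_diagonal]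
    exact (pi_norm_le_iff_of_nonneg zero_le_one).mpr fun _ ↦ norm_one.le
  have norm_mul_self : ‖K‖ * ‖K‖ = ‖(1 : Matrix q q ℝ)‖ := by
    rw [← l2_opNorm_conjTranspose_mul_self, conjTranspose_eq_transpose_of_trivial, hK]
  nlinarith [norm_nonneg K]

theorem euclNorm_transpose_mulVec_le {K : Matrix n q ℝ} (hK : Kᵀ * K = 1) (v : n → ℝ) :
    euclNorm (Kᵀ *ᵥ v) ≤ euclNorm v := by
  classical
  open scoped Matrix.Norms.L2Operator in
  have norm_transpose_le : ‖Kᵀ‖ ≤ 1 := by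
    rw [← conjTranspose_eq_transpose_of_trivial, l2_opNorm_conjTranspose]
    exact l2_opNorm_le_one_of_transpose_mul_self_eq_one hK
  simp only [euclNorm_eq_norm_toLp]
  exact (l2_opNorm_mulVec Kᵀ (WithLp.toLp 2 v)).trans
    (mul_le_of_le_one_left (norm_nonneg _) norm_transpose_le)

end OrthonormalColumns

section RidgeGradient

variable {τ m n : Type*} [Fintype τ] [Fintype n]

/-- The gradient in `A` of the ridge-penalized least squares loss
`(w/2) ∑ t, ‖y t - A z t‖₂² + (γ/2) ‖U - A‖_F²`. -/
def ridgeGrad (w γ : ℝ) (y : τ → m → ℝ) (z : τ → n → ℝ) (U A : Matrix m n ℝ) : Matrix m n ℝ :=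
  w • ∑ t, vecMulVec (A *ᵥ z t - y t) (z t) + γ • (A - U)

theorem ridgeGrad_sub_ridgeGrad (w γ : ℝ) (y : τ → m → ℝ) (z : τ → n → ℝ)
    (U B₁ B₂ : Matrix m n ℝ) :
    ridgeGrad w γ y z U B₁ - ridgeGrad w γ y z U B₂ =
      w • ∑ t, vecMulVec ((B₁ - B₂) *ᵥ z t) (z t) + γ • (B₁ - B₂) := by
  simp only [ridgeGrad, sub_mulVec, sub_vecMulVec, Finset.sum_sub_distrib]
  module

theorem frobNorm_vecMulVec_mulVec_self_le [Fintype m] (D : Matrix m n ℝ) (v : n → ℝ) :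
    frobNorm (vecMulVec (D *ᵥ v) v) ≤ euclNorm v ^ 2 * frobNorm D := by
  calc frobNorm (vecMulVec (D *ᵥ v) v) = euclNorm (D *ᵥ v) * euclNorm v :=
        frobNorm_vecMulVec _ _
    _ ≤ frobNorm D * euclNorm v * euclNorm v :=
        mul_le_mul_of_nonneg_right (euclNorm_mulVec_le_frobNorm_mul D v) (euclNorm_nonneg v)
    _ = euclNorm v ^ 2 * frobNorm D := by ring

theorem frobNorm_ridgeGrad_sub_le [Fintype m] (w γ : ℝ) (y : τ → m → ℝ) (z : τ → n → ℝ)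
    (U B₁ B₂ : Matrix m n ℝ) :
    frobNorm (ridgeGrad w γ y z U B₁ - ridgeGrad w γ y z U B₂) ≤
      (|w| * ∑ t, euclNorm (z t) ^ 2 + |γ|) * frobNorm (B₁ - B₂) := by
  rw [ridgeGrad_sub_ridgeGrad]
  set D := B₁ - B₂
  have data_term_le := fun t ↦ frobNorm_vecMulVec_mulVec_self_le D (z t)
  open scoped Matrix.Norms.Frobenius in
  simp only [frobNorm_eq_frobenius_norm] at data_term_le ⊢
  calc ‖w • ∑ t, vecMulVec (D *ᵥ z t) (z t) + γ • D‖
      ≤ |w| * ‖∑ t, vecMulVec (D *ᵥ z t) (z t)‖ + |γ| * ‖D‖ := by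
        simpa only [norm_smul, Real.norm_eq_abs] using
          norm_add_le (w • ∑ t, vecMulVec (D *ᵥ z t) (z t)) (γ • D)
    _ ≤ |w| * ∑ t, euclNorm (z t) ^ 2 * ‖D‖ + |γ| * ‖D‖ := by
        gcongr
        exact norm_sum_le_of_le _ fun t _ ↦ data_term_le t
    _ = (|w| * ∑ t, euclNorm (z t) ^ 2 + |γ|) * ‖D‖ := by
        rw [← Finset.sum_mul]
        ring

end RidgeGradient

section FactorGradient

variable {τ m n q r : Type*} [Fintype n] [Fintype q]

theorem vecMulVec_mul_mul_transpose (u : m → ℝ) (v : n → ℝ) (K : Matrix n q ℝ)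
    (G : Matrix r q ℝ) :
    vecMulVec u v * K * Gᵀ = vecMulVec u (G *ᵥ Kᵀ *ᵥ v) := by
  rw [vecMulVec_mul, vecMulVec_mul, mulVec_transpose, vecMul_transpose]

variable [Fintype τ] [Fintype m] [Fintype r] [DecidableEq q]

theorem grad_factor_lipschitz_general {w γ ν : ℝ} {y : τ → m → ℝ}
    {x : τ → n → ℝ} {K : Matrix n q ℝ} (hK : Kᵀ * K = 1) {G : Matrix r q ℝ}
    (hG : frobNorm G ≤ ν) {U : Matrix m r ℝ} {gradΨ : Matrix m r ℝ → Matrix m r ℝ}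
    (hgradΨ : ∀ A, gradΨ A =
      w • (∑ t, vecMulVec ((A * G * Kᵀ) *ᵥ x t - y t) (x t) * K * Gᵀ) + γ • (A - U))
    (B₁ B₂ : Matrix m r ℝ) :
    frobNorm (gradΨ B₁ - gradΨ B₂) ≤
      (ν ^ 2 * (|w| * ∑ t, euclNorm (x t) ^ 2) + |γ|) * frobNorm (B₁ - B₂) := by
  let z t := G *ᵥ Kᵀ *ᵥ x t
  have gradΨ_eq (A) : gradΨ A = ridgeGrad w γ y z U A := by
    simp only [hgradΨ, ridgeGrad, z, vecMulVec_mul_mul_transpose, mulVec_mulVec, A.mul_assoc]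
  have euclNorm_z_le (t) : euclNorm (z t) ≤ ν * euclNorm (x t) :=
    (euclNorm_mulVec_le_frobNorm_mul G _).trans <|
      mul_le_mul hG (euclNorm_transpose_mulVec_le hK _) (euclNorm_nonneg _)
        ((frobNorm_nonneg G).trans hG)
  have sum_sq_le : ∑ t, euclNorm (z t) ^ 2 ≤ ν ^ 2 * ∑ t, euclNorm (x t) ^ 2 := by
    simp only [Finset.mul_sum, ← mul_pow]
    exact Finset.sum_le_sum fun t _ ↦ pow_le_pow_left₀ (euclNorm_nonneg _) (euclNorm_z_le t) 2
  rw [gradΨ_eq, gradΨ_eq, mul_left_comm]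
  refine (frobNorm_ridgeGrad_sub_le w γ y z U B₁ B₂).trans ?_
  gcongr
  exact frobNorm_nonneg _

end FactorGradient

/-- Lipschitz continuity of the gradient of the penalized VAR loss with respect to
the response factor `A₁`: with
`∇Ψ(A₁) = (1/T) Σ_t (A₁ G Kᵀ x_t − y_t) x_tᵀ K Gᵀ + γ (A₁ − U)` and `K = A₃ ⊗ A₂`,
if `‖G‖_∞ ≤ c` then
`‖∇Ψ(A₁¹) − ∇Ψ(A₁²)‖_F ≤ (ν² c₁ + γ) ‖A₁¹ − A₁²‖_F`,
where `ν = c√(r₁r₂r₃)` and `c₁ = (1/T) Σ_t ‖x_t‖₂²`. -/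
theorem grad_factor_lipschitz
    (T m p r₁ r₂ r₃ : ℕ) (hT : 1 ≤ T)
    (c γ : ℝ) (hc : 0 < c) (hγ : 0 < γ)
    (y : Fin T → Fin m → ℝ) (x : Fin T → Fin p × Fin m → ℝ)
    (A₂ : Matrix (Fin m) (Fin r₂) ℝ) (A₃ : Matrix (Fin p) (Fin r₃) ℝ)
    (hA₂ : A₂ᵀ * A₂ = 1) (hA₃ : A₃ᵀ * A₃ = 1)
    (K : Matrix (Fin p × Fin m) (Fin r₃ × Fin r₂) ℝ) (hK : K = A₃ ⊗ₖ A₂)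
    (G : Matrix (Fin r₁) (Fin r₃ × Fin r₂) ℝ) (hG : ∀ i j, |G i j| ≤ c)
    (U : Matrix (Fin m) (Fin r₁) ℝ)
    (gradΨ : Matrix (Fin m) (Fin r₁) ℝ → Matrix (Fin m) (Fin r₁) ℝ)
    (hgradΨ : ∀ A₁, gradΨ A₁ = (T : ℝ)⁻¹ •
        (∑ t, Matrix.vecMulVec ((A₁ * G * Kᵀ).mulVec (x t) - y t) (x t) * K * Gᵀ)
        + γ • (A₁ - U)) :
    ∀ B₁ B₂ : Matrix (Fin m) (Fin r₁) ℝ,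
      frobNorm (gradΨ B₁ - gradΨ B₂)
        ≤ ((c * Real.sqrt ((r₁ : ℝ) * (r₂ : ℝ) * (r₃ : ℝ))) ^ 2
              * ((T : ℝ)⁻¹ * ∑ t, euclNorm (x t) ^ 2) + γ) * frobNorm (B₁ - B₂) := by
  intro B₁ B₂
  have hKK : Kᵀ * K = 1 := hK ▸ transpose_mul_self_kronecker_eq_one hA₃ hA₂
  have hGν : frobNorm G ≤ c * √(r₁ * r₂ * r₃) := by
    simpa [mul_assoc, mul_comm, mul_left_comm] using frobNorm_le_mul_sqrt_card hc.le hG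
  simpa [abs_of_pos hγ] using grad_factor_lipschitz_general hKK hGν hgradΨ B₁ B₂
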